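/- Shallow splitting for seq in BVr: for all structures R, T, P, if there is a BVr proof of [⟨R;T⟩;P], then there exist structures P1, P2 such that there is a BVr derivation from ⟨P1;P2⟩ to P, a BVr proof of [R;P1], and a BVr proof of [T;P2]. -/

import Mathlib

namespace DI

/-- SBVr structures: unit, atoms and their duals, par, copar, seq, renaming binder. -/
inductive Struct : Type
  | unit : Struct
  | atom : ℕ → Struct
  | natom : ℕ → Struct
  | par : Struct → Struct → Struct
  | copar : Struct → Struct → Struct
  | seq : Struct → Struct → Struct
  | ren : ℕ → Struct → Struct
  deriving DecidableEq

namespace Struct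

/-- Negation of structures (De Morgan: swaps par/copar, fixes seq and renaming). -/
def neg : Struct → Struct
  | unit => unit
  | atom a => natom a
  | natom a => atom a
  | par R T => copar R.neg T.neg
  | copar R T => par R.neg T.neg
  | seq R T => seq R.neg T.neg
  | ren a R => ren a R.neg

/-- Free atom names of a structure. -/
def free : Struct → Finset ℕ
  | unit => ∅
  | atom a => {a}
  | natom a => {a}
  | par R T => R.free ∪ T.free
  | copar R T => R.free ∪ T.free
  | seq R T => R.free ∪ T.free
  | ren a R => R.free.erase a

/-- All atom names occurring in a structure (free, bound, and binder names). -/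
def names : Struct → Finset ℕ
  | unit => ∅
  | atom a => {a}
  | natom a => {a}
  | par R T => R.names ∪ T.names
  | copar R T => R.names ∪ T.names
  | seq R T => R.names ∪ T.names
  | ren a R => insert a R.names

/-- `rename b a R` is `R{b/a}`: replace each free occurrence of atom `a` by `b`
(and `ā` by `b̄`). -/
def rename (b a : ℕ) : Struct → Struct
  | unit => unit
  | atom c => if c = a then atom b else atom c
  | natom c => if c = a then natom b else natom c
  | par R T => par (rename b a R) (rename b a T)
  | copar R T => copar (rename b a R) (rename b a T)
  | seq R T => seq (rename b a R) (rename b a T)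
  | ren c R => if c = a then ren c R else ren c (rename b a R)

/-- Size of a structure: the number of occurrences of atoms in it. -/
def size : Struct → ℕ
  | unit => 0
  | atom _ => 1
  | natom _ => 1
  | par R T => R.size + T.size
  | copar R T => R.size + T.size
  | seq R T => R.size + T.size
  | ren _ R => R.size

end Struct

open Struct

/-- Structural congruence on structures. -/
inductive Cong : Struct → Struct → Prop
  | refl (R) : Cong R R
  | symm : Cong R T → Cong T R
  | trans : Cong R T → Cong T U → Cong R U
  | par_congr : Cong R R' → Cong T T' → Cong (par R T) (par R' T')
  | copar_congr : Cong R R' → Cong T T' → Cong (copar R T) (copar R' T')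
  | seq_congr : Cong R R' → Cong T T' → Cong (seq R T) (seq R' T')
  | ren_congr (a) : Cong R R' → Cong (ren a R) (ren a R')
  | par_comm (R T) : Cong (par R T) (par T R)
  | par_assoc (R T U) : Cong (par (par R T) U) (par R (par T U))
  | par_unit (R) : Cong (par R unit) R
  | copar_comm (R T) : Cong (copar R T) (copar T R)
  | copar_assoc (R T U) : Cong (copar (copar R T) U) (copar R (copar T U))
  | copar_unit (R) : Cong (copar R unit) R
  | seq_assoc (R T U) : Cong (seq (seq R T) U) (seq R (seq T U))
  | seq_unit_r (R) : Cong (seq R unit) R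
  | seq_unit_l (R) : Cong (seq unit R) R
  /-- `R ≈ ⌊a⌋(R{a/b})` for a capture-free substitution of `a` for `b`. -/
  | ren_intro (a b : ℕ) (R : Struct) : a ∉ R.names →
      Cong R (ren a (R.rename a b))
  /-- α-equivalence of renaming. -/
  | ren_alpha (a b : ℕ) (R : Struct) : a ∉ R.names →
      Cong (ren b R) (ren a (R.rename a b))
  /-- Vacuous renaming. -/
  | ren_vac (a : ℕ) (R : Struct) : a ∉ R.free → Cong (ren a R) R
  /-- Commutation of renaming binders. -/
  | ren_comm (a b : ℕ) (R : Struct) : Cong (ren a (ren b R)) (ren b (ren a R))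

/-- Names of the inference rules of SBVr. -/
inductive RuleName : Type
  | aiDown | qDown | sw | rDown | aiUp | qUp | rUp
  deriving DecidableEq

/-- Shallow rule instances, read top-down: `Shallow ρ T R` means the rule `ρ`
has premise `T` and conclusion `R`. -/
inductive Shallow : RuleName → Struct → Struct → Prop
  | aiDown (a) : Shallow .aiDown unit (par (atom a) (natom a))
  | qDown (R T U V) :
      Shallow .qDown (seq (par R T) (par U V)) (par (seq R U) (seq T V))
  | sw (R T U) : Shallow .sw (copar (par R U) T) (par (copar R T) U)
  | rDown (a R T) :
      Shallow .rDown (ren a (par R T)) (par (ren a R) (ren a T))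
  | aiUp (a) : Shallow .aiUp (copar (atom a) (natom a)) unit
  | qUp (R T U V) :
      Shallow .qUp (copar (seq R T) (seq U V)) (seq (copar R U) (copar T V))
  | rUp (a R T) :
      Shallow .rUp (copar (ren a R) (ren a T)) (ren a (copar R T))

/-- Closure of a (premise, conclusion) relation under arbitrary contexts
and structural congruence. -/
inductive CtxClosure (r : Struct → Struct → Prop) : Struct → Struct → Prop
  | base : r T R → CtxClosure r T R
  | parL (U) : CtxClosure r T R → CtxClosure r (par T U) (par R U)
  | parR (U) : CtxClosure r T R → CtxClosure r (par U T) (par U R)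
  | coparL (U) : CtxClosure r T R → CtxClosure r (copar T U) (copar R U)
  | coparR (U) : CtxClosure r T R → CtxClosure r (copar U T) (copar U R)
  | seqL (U) : CtxClosure r T R → CtxClosure r (seq T U) (seq R U)
  | seqR (U) : CtxClosure r T R → CtxClosure r (seq U T) (seq U R)
  | ren (a) : CtxClosure r T R → CtxClosure r (ren a T) (ren a R)
  | congr : Cong T T' → CtxClosure r T' R' → Cong R' R → CtxClosure r T R

/-- One inference step in a system given by a set of rule names. -/
def Step (rules : RuleName → Prop) : Struct → Struct → Prop :=
  CtxClosure (fun T R => ∃ ρ, rules ρ ∧ Shallow ρ T R)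

/-- `Deriv rules T R`: there is a derivation in the system `rules` with
premise `T` and conclusion `R` (a finite composition of rule instances,
modulo structural congruence). -/
def Deriv (rules : RuleName → Prop) (T R : Struct) : Prop :=
  Relation.ReflTransGen (fun X Y => Step rules X Y ∨ Cong X Y) T R

/-- `Prov rules R`: `R` is provable, i.e. derivable from the unit. -/
def Prov (rules : RuleName → Prop) (R : Struct) : Prop :=
  Deriv rules unit R

/-- The system BVr: the down rules ai↓, q↓, s, r↓. -/
def BVr : RuleName → Prop := fun ρ =>
  ρ = .aiDown ∨ ρ = .qDown ∨ ρ = .sw ∨ ρ = .rDown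

/-- The system SBVr: BVr plus the up rules ai↑, q↑, r↑. -/
def SBVr : RuleName → Prop := fun _ => True

/-- The system SBV: the renaming-free fragment ai↓, q↓, s, ai↑, q↑. -/
def SBV : RuleName → Prop := fun ρ => ρ ≠ .rDown ∧ ρ ≠ .rUp

/-- BVr extended with the up rule q↑. -/
def BVrQ : RuleName → Prop := fun ρ => BVr ρ ∨ ρ = .qUp

/-- Contexts: structures with a single hole. -/
inductive Ctx : Type
  | hole : Ctx
  | parL (C : Ctx) (U : Struct) : Ctx
  | parR (U : Struct) (C : Ctx) : Ctx
  | coparL (C : Ctx) (U : Struct) : Ctx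
  | coparR (U : Struct) (C : Ctx) : Ctx
  | seqL (C : Ctx) (U : Struct) : Ctx
  | seqR (U : Struct) (C : Ctx) : Ctx
  | ren (a : ℕ) (C : Ctx) : Ctx

/-- Filling the hole of a context with a structure. -/
def Ctx.fill : Ctx → Struct → Struct
  | .hole, V => V
  | .parL C U, V => .par (C.fill V) U
  | .parR U C, V => .par U (C.fill V)
  | .coparL C U, V => .copar (C.fill V) U
  | .coparR U C, V => .copar U (C.fill V)
  | .seqL C U, V => .seq (C.fill V) U
  | .seqR U C, V => .seq U (C.fill V)
  | .ren a C, V => .ren a (C.fill V)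

/-- The renaming binders a context places over its hole. -/
def Ctx.binders : Ctx → Finset ℕ
  | .hole => ∅
  | .parL C _ => C.binders
  | .parR _ C => C.binders
  | .coparL C _ => C.binders
  | .coparR _ C => C.binders
  | .seqL C _ => C.binders
  | .seqR _ C => C.binders
  | .ren a C => insert a C.binders

/-- Lambda terms with explicit substitutions:
variables, abstractions, applications, and explicit substitutions `M⟨x:=P⟩`. -/
inductive Term : Type
  | var : ℕ → Term
  | lam : ℕ → Term → Term
  | app : Term → Term → Term
  | esub : Term → ℕ → Term → Term
  deriving DecidableEq

namespace Term

/-- Free variables of a term. -/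
def fv : Term → Finset ℕ
  | var x => {x}
  | lam x M => M.fv.erase x
  | app M N => M.fv ∪ N.fv
  | esub M x P => M.fv.erase x ∪ P.fv

/-- All variable names occurring in a term (free or bound). -/
def names : Term → Finset ℕ
  | var x => {x}
  | lam x M => insert x M.names
  | app M N => M.names ∪ N.names
  | esub M x P => insert x (M.names ∪ P.names)

/-- Linearity: bound variables occur free in their scope exactly once, and the
free variables of the components of applications and substitutions are disjoint. -/
def Linear : Term → Prop
  | var _ => True
  | lam x M => x ∈ M.fv ∧ M.Linear
  | app M N => M.Linear ∧ N.Linear ∧ Disjoint M.fv N.fv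
  | esub M x P => x ∈ M.fv ∧ M.Linear ∧ P.Linear ∧ Disjoint M.fv P.fv

end Term

/-- β-reduction with explicit substitutions. -/
inductive Beta : Term → Term → Prop
  | intro (x M N) : Beta (.app (.lam x M) N) (.esub M x N)
  | var (x P) : Beta (.esub (.var x) x P) P
  | lam (y x M P) : Beta (.esub (.lam y M) x P) (.lam y (.esub M x P))
  | appR (M N x P) : x ∈ N.fv → Beta (.esub (.app M N) x P) (.app M (.esub N x P))
  | appL (M N x P) : x ∈ M.fv → Beta (.esub (.app M N) x P) (.app (.esub M x P) N)

/-- The rewriting relation `M ⇒ N`: reflexive, contextual and transitive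
closure of β-reduction with explicit substitutions. -/
inductive Red : Term → Term → Prop
  | refl (M) : Red M M
  | beta : Beta M N → Red M N
  | trans : Red M P → Red P N → Red M N
  | lam (x) : Red M N → Red (.lam x M) (.lam x N)
  | appL : Red M N → Red (.app M P) (.app N P)
  | appR : Red M N → Red (.app P M) (.app P N)
  | esubL (x) : Red M N → Red (.esub M x P) (.esub N x P)
  | esubR (x) : Red M N → Red (.esub P x M) (.esub P x N)

/-- A name fresh for a given finite set of names. -/
def freshName (s : Finset ℕ) : ℕ := (s.sup id) + 1

/-- The map `⟦·⟧` from linear lambda terms with explicit substitutions to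
SBVr structures; `Term.tr M o` is `⟦M⟧o`. -/
def Term.tr : Term → ℕ → Struct
  | .var x, o => .seq (.atom x) (.natom o)
  | .lam x M, o =>
      let p := freshName (insert o (insert x M.names))
      .ren x (.ren p (.par (M.tr p) (.copar (.atom p) (.natom o))))
  | .app M N, o =>
      let q := freshName (insert o (M.names ∪ N.names))
      let p := freshName (insert q (insert o (M.names ∪ N.names)))
      .ren p (.par (M.tr p) (.par (.ren q (N.tr q)) (.copar (.atom p) (.natom o))))
  | .esub M x P, o => .ren x (.par (M.tr o) (P.tr x))

/-- The derived rules (premise, conclusion) on translated terms: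
o-ren, s-intro, s-var, s-λ, s-@l, s-@r. -/
inductive DerivedRule : Struct → Struct → Prop
  | oren (M : Term) (o p : ℕ) : p ∉ M.names → p ≠ o →
      DerivedRule (M.tr o) (.par (M.tr p) (.copar (.atom p) (.natom o)))
  | sIntro (M N : Term) (x o : ℕ) :
      DerivedRule ((Term.esub M x N).tr o) ((Term.app (.lam x M) N).tr o)
  | sVar (P : Term) (x o : ℕ) :
      DerivedRule (P.tr o) ((Term.esub (.var x) x P).tr o)
  | sLam (M P : Term) (x y o : ℕ) :
      DerivedRule ((Term.lam y (.esub M x P)).tr o) ((Term.esub (.lam y M) x P).tr o)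
  | sAppL (M N P : Term) (x o : ℕ) : x ∈ M.fv →
      DerivedRule ((Term.app (.esub M x P) N).tr o) ((Term.esub (.app M N) x P).tr o)
  | sAppR (M N P : Term) (x o : ℕ) : x ∈ N.fv →
      DerivedRule ((Term.app M (.esub N x P)).tr o) ((Term.esub (.app M N) x P).tr o)

/-- Derivations composed only of instances of the derived rules
(applied in arbitrary contexts, modulo congruence). -/
def DerivedDeriv : Struct → Struct → Prop :=
  Relation.ReflTransGen (fun X Y => CtxClosure DerivedRule X Y ∨ Cong X Y)

end DI

namespace DI

/-!
Structures modulo BVr-interderivability form an ordered algebra with a commutative product (par)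
and a monoid product (seq) with the same unit, related by the exchange law `q↓`. Over any such
algebra, pairs `(pos, neg)` of upper sets whose members are orthogonal (the par of an element of
`pos` and an element of `neg` is above `unit`) form a model of BVr in which seq acts componentwise,
so that it is self-dual. Every structure `X` lies in the `neg` component of its own interpretation,
while a proof of `[⟨R;T⟩;P]` puts `unit` in the `pos` component of the interpretation of
`[⟨R;T⟩;P]`; combined at `P` these facts put `P` above some `⟨P₁;P₂⟩` with `P₁` orthogonal to `R`
and `P₂` to `T`.
-/

open scoped Pointwise

section UpperClosure

variable {α : Type*} [Preorder α]

@[to_additive]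
theorem upperClosure_upperClosure_mul [Mul α] [MulRightMono α] (s t : Set α) :
    upperClosure ((upperClosure s : Set α) * t) = upperClosure (s * t) := by
  refine le_antisymm (upperClosure_anti (Set.mul_subset_mul_right subset_upperClosure)) ?_
  rintro z ⟨_, ⟨x, ⟨x', hx', hx⟩, y, hy, rfl⟩, hz⟩
  exact ⟨x' * y, Set.mul_mem_mul hx' hy, (mul_le_mul_left hx y).trans hz⟩

@[to_additive]
theorem upperClosure_mul_upperClosure [Mul α] [MulLeftMono α] (s t : Set α) :
    upperClosure (s * (upperClosure t : Set α)) = upperClosure (s * t) := by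
  refine le_antisymm (upperClosure_anti (Set.mul_subset_mul_left subset_upperClosure)) ?_
  rintro z ⟨_, ⟨x, hx, y, ⟨y', hy', hy⟩, rfl⟩, hz⟩
  exact ⟨x * y', Set.mul_mem_mul hx hy', (mul_le_mul_right hy x).trans hz⟩

@[to_additive]
theorem upperClosure_mul_Ici_one [MulOneClass α] [MulLeftMono α] (s : UpperSet α) :
    upperClosure ((s : Set α) * (UpperSet.Ici (1 : α) : Set α)) = s := by
  rw [← upperClosure_singleton, upperClosure_mul_upperClosure, Set.singleton_one, mul_one,
    UpperSet.upperClosure]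

theorem upperClosure_Ici_one_mul [MulOneClass α] [MulRightMono α] (s : UpperSet α) :
    upperClosure ((UpperSet.Ici (1 : α) : Set α) * (s : Set α)) = s := by
  rw [← upperClosure_singleton, upperClosure_upperClosure_mul, Set.singleton_one, one_mul,
    UpperSet.upperClosure]

end UpperClosure

/-- Concurrent monoids: `+` is parallel and `*` is sequential composition. The two share their
unit and are related by the exchange law. The model case is structures with par and seq, ordered
by derivability from premise to conclusion. -/
class ConcurrentMonoid (M : Type*) extends
    AddCommMonoid M, Monoid M, PartialOrder M, IsOrderedAddMonoid M where
  protected mul_le_mul {a b c d : M} : a ≤ b → c ≤ d → a * c ≤ b * d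
  one_eq_zero : (1 : M) = 0
  exchange (a b c d : M) : (a + b) * (c + d) ≤ a * c + b * d

namespace ConcurrentMonoid

variable {M : Type*} [ConcurrentMonoid M]

instance : MulLeftMono M := ⟨fun _ _ _ h => ConcurrentMonoid.mul_le_mul le_rfl h⟩

instance : MulRightMono M := ⟨fun _ _ _ h => ConcurrentMonoid.mul_le_mul h le_rfl⟩

theorem zero_le_mul_add_mul {a b c d : M} (hab : 0 ≤ a + b) (hcd : 0 ≤ c + d) :
    0 ≤ a * c + b * d :=
  calc
    (0 : M) = 0 * 0 := by rw [← one_eq_zero, one_mul]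
    _ ≤ (a + b) * (c + d) := mul_le_mul' hab hcd
    _ ≤ a * c + b * d := exchange a b c d

end ConcurrentMonoid

open ConcurrentMonoid

/-- Chu pairs over a concurrent monoid: an upper set of realizers and an upper set of
counter-realizers, any two of which compose in parallel to something above the unit. They are the
truth values of the model used to extract splittings. -/
@[ext]
structure Chu (M : Type*) [ConcurrentMonoid M] where
  pos : UpperSet M
  neg : UpperSet M
  orthogonal {x y : M} : x ∈ pos → y ∈ neg → 0 ≤ x + y

namespace Chu

variable {M : Type*} [ConcurrentMonoid M]

/-- A Chu pair gets larger by gaining realizers and losing counter-realizers. -/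
instance : PartialOrder (Chu M) where
  le A B := (A.pos : Set M) ⊆ B.pos ∧ (B.neg : Set M) ⊆ A.neg
  le_refl _ := ⟨subset_rfl, subset_rfl⟩
  le_trans _ _ _ h h' := ⟨h.1.trans h'.1, h'.2.trans h.2⟩
  le_antisymm _ _ h h' := Chu.ext (SetLike.coe_injective (h.1.antisymm h'.1))
    (SetLike.coe_injective (h'.2.antisymm h.2))

/-- The Chu pair generated by two orthogonal elements. -/
def principal (x y : M) (h : 0 ≤ x + y) : Chu M where
  pos := .Ici x
  neg := .Ici y
  orthogonal hx hy := h.trans (add_le_add hx hy)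

/-- Linear negation, exchanging realizers and counter-realizers. -/
def dual (A : Chu M) : Chu M where
  pos := A.neg
  neg := A.pos
  orthogonal hx hy := by rw [add_comm]; exact A.orthogonal hy hx

theorem dual_le_dual {A B : Chu M} (h : A ≤ B) : B.dual ≤ A.dual := ⟨h.2, h.1⟩

instance : Zero (Chu M) := ⟨principal 0 0 (add_zero 0).ge⟩

/-- Par of Chu pairs. A realizer of `A + B` is an element that turns the counter-realizers of
either component into realizers of the other one. -/
instance : Add (Chu M) where
  add A B :=
    { pos := ⟨{x | (∀ y ∈ A.neg, x + y ∈ B.pos) ∧ ∀ y ∈ B.neg, x + y ∈ A.pos},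
        fun _ _ hxy hx =>
          ⟨fun z hz => B.pos.upper (add_le_add_left hxy z) (hx.1 z hz),
            fun z hz => A.pos.upper (add_le_add_left hxy z) (hx.2 z hz)⟩⟩
      neg := upperClosure (A.neg + B.neg)
      orthogonal := by
        rintro x z ⟨hx, _⟩ ⟨_, ⟨a, ha, b, hb, rfl⟩, hz⟩
        calc
          0 ≤ x + a + b := B.orthogonal (hx a ha) hb
          _ = x + (a + b) := add_assoc x a b
          _ ≤ x + z := add_le_add_right hz x }

instance : One (Chu M) := ⟨0⟩

/-- Seq of Chu pairs. It acts componentwise on realizers and counter-realizers alike, hence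
commutes with `dual`. -/
instance : Mul (Chu M) where
  mul A B :=
    { pos := upperClosure (A.pos * B.pos)
      neg := upperClosure (A.neg * B.neg)
      orthogonal := by
        rintro x y ⟨_, ⟨a, ha, b, hb, rfl⟩, hx⟩ ⟨_, ⟨a', ha', b', hb', rfl⟩, hy⟩
        exact (zero_le_mul_add_mul (A.orthogonal ha ha') (B.orthogonal hb hb')).trans
          (add_le_add hx hy) }

theorem pos_mul (A B : Chu M) : (A * B).pos = upperClosure (A.pos * B.pos : Set M) := rfl

theorem neg_mul (A B : Chu M) : (A * B).neg = upperClosure (A.neg * B.neg : Set M) := rfl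

theorem neg_add (A B : Chu M) : (A + B).neg = upperClosure (A.neg + B.neg : Set M) := rfl

theorem pos_one : (1 : Chu M).pos = .Ici 1 := by rw [one_eq_zero]; rfl

theorem neg_one : (1 : Chu M).neg = .Ici 1 := by rw [one_eq_zero]; rfl

theorem add_mem_neg_add {A B : Chu M} {x y : M} (hx : x ∈ A.neg) (hy : y ∈ B.neg) :
    x + y ∈ (A + B).neg :=
  subset_upperClosure (Set.add_mem_add hx hy)

theorem mul_mem_neg_mul {A B : Chu M} {x y : M} (hx : x ∈ A.neg) (hy : y ∈ B.neg) :
    x * y ∈ (A * B).neg :=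
  subset_upperClosure (Set.mul_mem_mul hx hy)

protected theorem add_le_add {A A' B B' : Chu M} (hA : A ≤ A') (hB : B ≤ B') :
    A + B ≤ A' + B' :=
  ⟨fun _ hx => ⟨fun y hy => hB.1 (hx.1 y (hA.2 hy)), fun y hy => hA.1 (hx.2 y (hB.2 hy))⟩,
    upperClosure_anti (Set.add_subset_add hA.2 hB.2)⟩

protected theorem mul_le_mul {A A' B B' : Chu M} (hA : A ≤ A') (hB : B ≤ B') :
    A * B ≤ A' * B' :=
  ⟨upperClosure_anti (Set.mul_subset_mul hA.1 hB.1),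
    upperClosure_anti (Set.mul_subset_mul hA.2 hB.2)⟩

protected theorem add_comm (A B : Chu M) : A + B = B + A :=
  Chu.ext (SetLike.ext fun _ => and_comm) (by rw [neg_add, neg_add, add_comm])

protected theorem add_zero (A : Chu M) : A + 0 = A := by
  refine Chu.ext (SetLike.ext fun x => ⟨fun hx => ?_, fun hx => ?_⟩)
    (upperClosure_add_Ici_zero A.neg)
  · simpa only [add_zero] using hx.2 0 le_rfl
  · exact ⟨fun _ hy => A.orthogonal hx hy, fun _ hy => A.pos.upper (le_add_of_nonneg_right hy) hx⟩

theorem add_assoc_le (A B C : Chu M) : A + B + C ≤ A + (B + C) := by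
  constructor
  · rintro x ⟨hC, hAB⟩
    refine ⟨fun a ha => ⟨fun b hb => ?_, fun c hc => ?_⟩, ?_⟩
    · simpa only [add_assoc] using hC (a + b) (add_mem_neg_add ha hb)
    · simpa only [add_right_comm x c a] using (hAB c hc).1 a ha
    · rintro z ⟨_, ⟨b, hb, c, hc, rfl⟩, hz⟩
      refine A.pos.upper (add_le_add_right hz x) ?_
      simpa only [SetLike.mem_coe, add_assoc, add_comm c b] using (hAB c hc).2 b hb
  · rw [neg_add, neg_add, neg_add, neg_add, upperClosure_upperClosure_add,
      upperClosure_add_upperClosure, add_assoc]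

protected theorem add_assoc (A B C : Chu M) : A + B + C = A + (B + C) := by
  refine le_antisymm (add_assoc_le A B C) ?_
  simpa only [Chu.add_comm] using add_assoc_le C B A

instance : AddCommMonoid (Chu M) where
  add_assoc := Chu.add_assoc
  add_comm := Chu.add_comm
  add_zero := Chu.add_zero
  zero_add A := by rw [Chu.add_comm, Chu.add_zero]
  nsmul := nsmulRec

instance : Monoid (Chu M) where
  mul_assoc A B C := by
    ext1 <;> simp only [pos_mul, neg_mul, upperClosure_upperClosure_mul,
      upperClosure_mul_upperClosure, mul_assoc]
  mul_one A := by
    ext1 <;> simp only [pos_mul, neg_mul, pos_one, neg_one, upperClosure_mul_Ici_one]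
  one_mul A := by
    ext1 <;> simp only [pos_mul, neg_mul, pos_one, neg_one, upperClosure_Ici_one_mul]

theorem exchange (A B C D : Chu M) : (A + B) * (C + D) ≤ A * C + B * D := by
  constructor
  · rintro z ⟨_, ⟨x, hx, y, hy, rfl⟩, hz⟩
    constructor
    · rintro w ⟨_, ⟨a, ha, c, hc, rfl⟩, hw⟩
      exact ⟨_, Set.mul_mem_mul (hx.1 a ha) (hy.1 c hc),
        (ConcurrentMonoid.exchange x a y c).trans (add_le_add hz hw)⟩
    · rintro w ⟨_, ⟨b, hb, d, hd, rfl⟩, hw⟩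
      exact ⟨_, Set.mul_mem_mul (hx.2 b hb) (hy.2 d hd),
        (ConcurrentMonoid.exchange x b y d).trans (add_le_add hz hw)⟩
  · rintro z ⟨_, ⟨x, ⟨_, ⟨a, ha, c, hc, rfl⟩, hx⟩, y, ⟨_, ⟨b, hb, d, hd, rfl⟩, hy⟩, rfl⟩, hz⟩
    exact ⟨_, Set.mul_mem_mul (add_mem_neg_add ha hb) (add_mem_neg_add hc hd),
      (ConcurrentMonoid.exchange a b c d).trans ((add_le_add hx hy).trans hz)⟩

instance : ConcurrentMonoid (Chu M) where
  add_le_add_left _ _ h _ := Chu.add_le_add h le_rfl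
  mul_le_mul := Chu.mul_le_mul
  one_eq_zero := rfl
  exchange := exchange

theorem zero_le_add_dual (A : Chu M) : 0 ≤ A + A.dual := by
  constructor
  · intro x hx
    exact ⟨fun y hy => A.neg.upper (le_add_of_nonneg_left hx) hy,
      fun y hy => A.pos.upper (le_add_of_nonneg_left hx) hy⟩
  · rintro z ⟨_, ⟨y, hy, x, hx, rfl⟩, hz⟩
    exact (A.dual.orthogonal hy hx).trans hz

/-- The tensor of Chu pairs, the De Morgan dual of `+`; it interprets copar. -/
def copar (A B : Chu M) : Chu M := (A.dual + B.dual).dual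

theorem copar_le_copar {A A' B B' : Chu M} (hA : A ≤ A') (hB : B ≤ B') :
    A.copar B ≤ A'.copar B' :=
  dual_le_dual (add_le_add (dual_le_dual hA) (dual_le_dual hB))

theorem copar_comm (A B : Chu M) : A.copar B = B.copar A :=
  congrArg dual (add_comm A.dual B.dual)

theorem copar_assoc (A B C : Chu M) : (A.copar B).copar C = A.copar (B.copar C) :=
  congrArg dual (add_assoc A.dual B.dual C.dual)

theorem copar_zero (A : Chu M) : A.copar 0 = A :=
  congrArg dual (add_zero A.dual)

theorem pos_copar_add_subset (A B C : Chu M) :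
    (((A + C).copar B).pos : Set M) ⊆ (A.copar B + C).pos := by
  rintro z ⟨_, ⟨x, hx, b, hb, rfl⟩, hz⟩
  refine ⟨fun y hy => ?_, fun c hc => ⟨x + c + b, Set.add_mem_add (hx.2 c hc) hb, ?_⟩⟩
  · refine C.pos.upper (add_le_add_left hz y) ?_
    simpa only [SetLike.mem_coe, add_assoc, add_comm y b] using hx.1 (y + b) (hy.2 b hb)
  · rw [add_right_comm]
    exact add_le_add_left hz c

-- Switch is self-dual: its `neg` half is its `pos` half for the dual pairs, with `B` and `C`
-- interchanged.
theorem switch (A B C : Chu M) : (A + C).copar B ≤ A.copar B + C :=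
  ⟨pos_copar_add_subset A B C, pos_copar_add_subset A.dual C.dual B.dual⟩

end Chu

section Interpretation

variable {M : Type*} [ConcurrentMonoid M] (K : Chu M)

/-- The interpretation of structures as Chu pairs. Every atom gets the same value `K` and binders
are ignored, since `Cong` identifies all atoms (`cong_atom`). -/
def interp : Struct → Chu M
  | .unit => 0
  | .atom _ => K
  | .natom _ => K.dual
  | .par R T => interp R + interp T
  | .copar R T => (interp R).copar (interp T)
  | .seq R T => interp R * interp T
  | .ren _ R => interp R

theorem interp_rename (a b : ℕ) (R : Struct) : interp K (R.rename a b) = interp K R := by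
  induction R with
  | unit => rfl
  | atom c | natom c => simp only [Struct.rename]; split <;> rfl
  | par R T hR hT | copar R T hR hT | seq R T hR hT => simp only [Struct.rename, interp, hR, hT]
  | ren c R hR => simp only [Struct.rename]; split <;> simp only [interp, hR]

theorem interp_eq_of_cong {X Y : Struct} (h : Cong X Y) : interp K X = interp K Y := by
  induction h with
  | refl | ren_vac | ren_comm => rfl
  | symm _ h => exact h.symm
  | trans _ _ h h' => exact h.trans h'
  | par_congr _ _ h h' | copar_congr _ _ h h' | seq_congr _ _ h h' => simp only [interp, h, h']
  | ren_congr _ _ h => exact h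
  | par_comm => exact add_comm _ _
  | par_assoc => exact add_assoc _ _ _
  | par_unit => exact add_zero _
  | copar_comm => exact Chu.copar_comm _ _
  | copar_assoc => exact Chu.copar_assoc _ _ _
  | copar_unit => exact Chu.copar_zero _
  | seq_assoc => exact mul_assoc _ _ _
  | seq_unit_r => exact mul_one _
  | seq_unit_l => exact one_mul _
  | ren_intro | ren_alpha => simp only [interp, interp_rename]

theorem interp_le_of_shallow {ρ : RuleName} {X Y : Struct} (hρ : BVr ρ) (h : Shallow ρ X Y) :
    interp K X ≤ interp K Y := by
  cases h with
  | aiDown => exact K.zero_le_add_dual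
  | qDown => exact exchange _ _ _ _
  | sw => exact Chu.switch _ _ _
  | rDown => exact le_rfl
  | aiUp | qUp | rUp => simp [BVr] at hρ

theorem interp_le_of_step {X Y : Struct} (h : Step BVr X Y) : interp K X ≤ interp K Y := by
  unfold Step at h
  induction h with
  | base h => obtain ⟨ρ, hρ, h⟩ := h; exact interp_le_of_shallow K hρ h
  | parL _ _ h => exact add_le_add h le_rfl
  | parR _ _ h => exact add_le_add le_rfl h
  | coparL _ _ h => exact Chu.copar_le_copar h le_rfl
  | coparR _ _ h => exact Chu.copar_le_copar le_rfl h
  | seqL _ _ h => exact mul_le_mul' h le_rfl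
  | seqR _ _ h => exact mul_le_mul' le_rfl h
  | ren _ _ h => exact h
  | congr hX _ hY h => rwa [interp_eq_of_cong K hX, ← interp_eq_of_cong K hY]

theorem interp_le_of_deriv {X Y : Struct} (h : Deriv BVr X Y) : interp K X ≤ interp K Y := by
  induction h with
  | refl => exact le_rfl
  | tail _ h ih => exact ih.trans (h.elim (interp_le_of_step K) fun h => (interp_eq_of_cong K h).le)

end Interpretation

-- Since `ren_intro` renames free atoms, `R` and `ren b R` are both congruent to
-- `ren a (R.rename a b)` for fresh `a`, even when `b` is free in `R`.
theorem cong_ren (b : ℕ) (R : Struct) : Cong R (.ren b R) := by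
  obtain ⟨a, ha⟩ := Infinite.exists_notMem_finset R.names
  exact (Cong.ren_intro a b R ha).trans (Cong.ren_alpha a b R ha).symm

theorem cong_rename {a : ℕ} (b : ℕ) {R : Struct} (ha : a ∉ R.names) : Cong R (R.rename a b) :=
  (Cong.ren_intro a b R ha).trans (cong_ren a _).symm

theorem cong_atom (a b : ℕ) : Cong (.atom a) (.atom b) := by
  obtain rfl | hba := eq_or_ne b a
  · exact .refl _
  · simpa only [Struct.rename, if_true] using
      cong_rename a (R := .atom a) (by simpa only [Struct.names, Finset.mem_singleton] using hba)

theorem cong_natom (a b : ℕ) : Cong (.natom a) (.natom b) := by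
  obtain rfl | hba := eq_or_ne b a
  · exact .refl _
  · simpa only [Struct.rename, if_true] using
      cong_rename a (R := .natom a) (by simpa only [Struct.names, Finset.mem_singleton] using hba)

section Deriv

variable {rules : RuleName → Prop}

theorem Deriv.of_cong {X Y : Struct} (h : Cong X Y) : Deriv rules X Y := .single (.inr h)

theorem Deriv.of_shallow {ρ : RuleName} {X Y : Struct} (hρ : rules ρ) (h : Shallow ρ X Y) :
    Deriv rules X Y :=
  .single (.inl (.base ⟨ρ, hρ, h⟩))

theorem Deriv.par {X X' Y Y' : Struct} (hX : Deriv rules X X') (hY : Deriv rules Y Y') :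
    Deriv rules (.par X Y) (.par X' Y') :=
  .trans (hX.lift (Struct.par · Y) fun _ _ => .imp (.parL Y) (.par_congr · (.refl Y)))
    (hY.lift (Struct.par X' ·) fun _ _ => .imp (.parR X') (.par_congr (.refl X')))

theorem Deriv.seq {X X' Y Y' : Struct} (hX : Deriv rules X X') (hY : Deriv rules Y Y') :
    Deriv rules (.seq X Y) (.seq X' Y') :=
  .trans (hX.lift (Struct.seq · Y) fun _ _ => .imp (.seqL Y) (.seq_congr · (.refl Y)))
    (hY.lift (Struct.seq X' ·) fun _ _ => .imp (.seqR X') (.seq_congr (.refl X')))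

theorem Deriv.coparL {X X' : Struct} (hX : Deriv rules X X') (Y : Struct) :
    Deriv rules (.copar X Y) (.copar X' Y) :=
  hX.lift (Struct.copar · Y) fun _ _ => .imp (.coparL Y) (.copar_congr · (.refl Y))

theorem Deriv.par_copar_of_prov (hsw : rules .sw) {X Z : Struct} (h : Prov rules (.par X Z))
    (Y : Struct) : Deriv rules Y (.par (.copar X Y) Z) :=
  (Deriv.of_cong ((Cong.copar_unit Y).symm.trans (.copar_comm Y .unit))).trans
    ((h.coparL Y).trans (Deriv.of_shallow hsw (.sw X Y Z)))

end Deriv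

instance : Preorder Struct where
  le := Deriv BVr
  le_refl _ := .refl
  le_trans _ _ _ := .trans

/-- Structures up to mutual derivability in BVr, ordered by derivability. -/
abbrev DerivClass : Type := Antisymmetrization Struct (· ≤ ·)

namespace DerivClass

/-- The class of a structure. -/
def mk (X : Struct) : DerivClass := toAntisymmetrization (· ≤ ·) X

theorem mk_le_mk {X Y : Struct} : mk X ≤ mk Y ↔ Deriv BVr X Y := Iff.rfl

theorem mk_eq_mk_of_cong {X Y : Struct} (h : Cong X Y) : mk X = mk Y :=
  le_antisymm (mk_le_mk.2 (.of_cong h)) (mk_le_mk.2 (.of_cong h.symm))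

theorem mk_surjective : Function.Surjective mk := Quotient.mk_surjective

instance : Zero DerivClass := ⟨mk .unit⟩

instance : One DerivClass := ⟨mk .unit⟩

instance : Add DerivClass :=
  ⟨Quotient.map₂ Struct.par fun _ _ hX _ _ hY => ⟨hX.1.par hY.1, hX.2.par hY.2⟩⟩

instance : Mul DerivClass :=
  ⟨Quotient.map₂ Struct.seq fun _ _ hX _ _ hY => ⟨hX.1.seq hY.1, hX.2.seq hY.2⟩⟩

theorem mk_par (X Y : Struct) : mk (.par X Y) = mk X + mk Y := rfl

theorem zero_le_mk {X : Struct} : 0 ≤ mk X ↔ Prov BVr X := Iff.rfl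

instance : AddCommMonoid DerivClass where
  add_assoc := by rintro ⟨X⟩ ⟨Y⟩ ⟨Z⟩; exact mk_eq_mk_of_cong (.par_assoc X Y Z)
  add_comm := by rintro ⟨X⟩ ⟨Y⟩; exact mk_eq_mk_of_cong (.par_comm X Y)
  add_zero := by rintro ⟨X⟩; exact mk_eq_mk_of_cong (.par_unit X)
  zero_add := by
    rintro ⟨X⟩
    exact mk_eq_mk_of_cong ((Cong.par_comm .unit X).trans (.par_unit X))
  nsmul := nsmulRec

instance : Monoid DerivClass where
  mul_assoc := by rintro ⟨X⟩ ⟨Y⟩ ⟨Z⟩; exact mk_eq_mk_of_cong (.seq_assoc X Y Z)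
  mul_one := by rintro ⟨X⟩; exact mk_eq_mk_of_cong (.seq_unit_r X)
  one_mul := by rintro ⟨X⟩; exact mk_eq_mk_of_cong (.seq_unit_l X)

instance : ConcurrentMonoid DerivClass where
  add_le_add_left := by rintro ⟨X⟩ ⟨Y⟩ h ⟨Z⟩; exact Deriv.par h .refl
  mul_le_mul := by rintro ⟨X⟩ ⟨Y⟩ ⟨Z⟩ ⟨W⟩ h h'; exact Deriv.seq h h'
  one_eq_zero := rfl
  exchange := by
    rintro ⟨R⟩ ⟨T⟩ ⟨U⟩ ⟨V⟩
    exact Deriv.of_shallow (.inr (.inl rfl)) (.qDown R T U V)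

theorem zero_le_mk_atom_add_mk_natom (a : ℕ) : 0 ≤ mk (.natom a) + mk (.atom a) := by
  rw [add_comm, ← mk_par, zero_le_mk]
  exact .of_shallow (.inl rfl) (.aiDown a)

theorem mk_le_mk_copar_add {X : Struct} {z : DerivClass} (h : 0 ≤ mk X + z) (Y : Struct) :
    mk Y ≤ mk (.copar X Y) + z := by
  obtain ⟨Z, rfl⟩ := mk_surjective z
  exact Deriv.par_copar_of_prov (.inr (.inr (.inl rfl))) h Y

theorem mk_copar_mem_pos_add {A B : Chu DerivClass} {X Y : Struct} (hX : mk X ∈ A.pos)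
    (hY : mk Y ∈ B.pos) : mk (.copar X Y) ∈ (A + B).pos := by
  refine ⟨fun z hz => B.pos.upper (mk_le_mk_copar_add (A.orthogonal hX hz) Y) hY, fun z hz => ?_⟩
  rw [mk_eq_mk_of_cong (.copar_comm X Y)]
  exact A.pos.upper (mk_le_mk_copar_add (B.orthogonal hY hz) X) hX

/-- The value of atoms for which every structure counter-realizes itself. -/
def atomValue : Chu DerivClass :=
  .principal (mk (.natom 0)) (mk (.atom 0)) (zero_le_mk_atom_add_mk_natom 0)

theorem mk_mem_neg_interp (X : Struct) : mk X ∈ (interp atomValue X).neg := by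
  induction X with
  | unit => exact le_refl (0 : DerivClass)
  | atom a => exact (mk_eq_mk_of_cong (cong_atom 0 a)).le
  | natom a => exact (mk_eq_mk_of_cong (cong_natom 0 a)).le
  | par R T hR hT => exact Chu.add_mem_neg_add hR hT
  | copar R T hR hT =>
    exact mk_copar_mem_pos_add (A := (interp atomValue R).dual) (B := (interp atomValue T).dual)
      hR hT
  | seq R T hR hT => exact Chu.mul_mem_neg_mul hR hT
  | ren a R hR => rwa [← mk_eq_mk_of_cong (cong_ren a R)]

theorem zero_le_mk_add_of_mem_pos {X : Struct} {y : DerivClass}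
    (hy : y ∈ (interp atomValue X).pos) : 0 ≤ mk X + y := by
  rw [add_comm]
  exact (interp atomValue X).orthogonal hy (mk_mem_neg_interp X)

theorem zero_mem_pos_interp_of_prov {X : Struct} (h : Prov BVr X) :
    0 ∈ (interp atomValue X).pos :=
  (interp_le_of_deriv atomValue h).1 (le_refl (0 : DerivClass))

end DerivClass

open DerivClass

/-- Shallow splitting for seq in BVr. -/
theorem shallow_splitting_seq (R T P : Struct)
    (h : Prov BVr (.par (.seq R T) P)) :
    ∃ P₁ P₂ : Struct, Deriv BVr (.seq P₁ P₂) P ∧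
      Prov BVr (.par R P₁) ∧ Prov BVr (.par T P₂) := by
  have hP : mk P ∈ (interp atomValue R * interp atomValue T).pos := by
    have hadd := (zero_mem_pos_interp_of_prov h).2 (mk P) (mk_mem_neg_interp P)
    rwa [zero_add] at hadd
  obtain ⟨_, ⟨p₁, hp₁, p₂, hp₂, rfl⟩, hle⟩ := hP
  obtain ⟨P₁, rfl⟩ := mk_surjective p₁
  obtain ⟨P₂, rfl⟩ := mk_surjective p₂
  exact ⟨P₁, P₂, hle, zero_le_mk_add_of_mem_pos hp₁, zero_le_mk_add_of_mem_pos hp₂⟩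

end DI
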